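/- arXiv:1102.5557 — 2 statements merged into one kernel-verified Lean document; each statement's English description precedes it below -/
import Mathlib

section
/- Let Ω ⊆ ℝ be a finite union of bounded open intervals of total length 1 and let Λ be a spectrum of Ω. Suppose L ⊆ ℝ and (c_n)_{n≥1} is a sequence with c_n ∈ Λ such that for every n ≥ 1 one has L ∩ (−n, n) = (Λ − c_n) ∩ (−n, n). Then L is also a spectrum of Ω. -/
open MeasureTheory Set

/-- The exponential function `e_λ(x) = exp(2πiλx)`. -/
noncomputable def expF (lam : ℝ) : ℝ → ℂ :=
  fun x => Complex.exp (2 * (Real.pi : ℂ) * Complex.I * (lam : ℂ) * (x : ℂ))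

/-- `Λ` is a spectrum of `Ω`. -/
def IsSpectrum (Ω Λ : Set ℝ) : Prop :=
  ∃ F : Λ → Lp ℂ 2 (volume.restrict Ω),
    (∀ l : Λ, ⇑(F l) =ᵐ[volume.restrict Ω] expF (l : ℝ)) ∧
    Orthonormal ℂ F ∧
    (Submodule.span ℂ (Set.range F)).topologicalClosure = ⊤

lemma hasSum_congr_aux {ι : Type*} {f g : ι → ℂ} {x : ℂ} (h : HasSum f x)
    (e : ∀ i, g i = f i) : HasSum g x := by
  rwa [funext e]

/-- Fourier-type integral of the indicator. -/
noncomputable def phiF (Ω : Set ℝ) (s : ℝ) : ℂ := ∫ x in Ω, expF s x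

lemma expF_continuous2 : Continuous (fun p : ℝ × ℝ => expF p.1 p.2) := by
  unfold expF; fun_prop

lemma expF_continuous (s : ℝ) : Continuous (expF s) := by
  unfold expF; fun_prop

lemma expF_norm (s x : ℝ) : ‖expF s x‖ = 1 := by
  unfold expF
  have : (2 * (Real.pi : ℂ) * Complex.I * (s : ℂ) * (x : ℂ))
      = ((2 * Real.pi * s * x : ℝ) : ℂ) * Complex.I := by push_cast; ring
  rw [this, Complex.norm_exp_ofReal_mul_I]

lemma expF_conj_mul (s t x : ℝ) : (starRingEnd ℂ) (expF s x) * expF t x = expF (t - s) x := by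
  unfold expF
  rw [← Complex.exp_conj, ← Complex.exp_add]
  congr 1
  simp only [map_mul, Complex.conj_ofReal, Complex.conj_I, map_ofNat]
  push_cast; ring

lemma expF_integrableOn {S : Set ℝ} (hS : volume S ≠ ⊤) (s : ℝ) :
    IntegrableOn (expF s) S := by
  haveI : IsFiniteMeasure (volume.restrict S) := ⟨by simpa using hS.lt_top⟩
  exact Integrable.of_bound (expF_continuous s).aestronglyMeasurable 1
    (Filter.Eventually.of_forall fun x => (expF_norm s x).le)

lemma expF_memLp {S : Set ℝ} (hS : volume S ≠ ⊤) (s : ℝ) :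
    MemLp (expF s) 2 (volume.restrict S) := by
  haveI : IsFiniteMeasure (volume.restrict S) := ⟨by simpa using hS.lt_top⟩
  exact MemLp.of_bound (expF_continuous s).aestronglyMeasurable 1
    (Filter.Eventually.of_forall fun x => (expF_norm s x).le)

lemma phiF_Ioo (a b s : ℝ) : ‖phiF (Ioo a b) s‖ * |s| ≤ 2 := by
  rcases eq_or_ne s 0 with rfl | hs
  · simp
  rcases le_or_gt b a with hab | hab
  · simp [phiF, Ioo_eq_empty (not_lt.2 hab)]
  unfold phiF
  rw [← integral_Ioc_eq_integral_Ioo, ← intervalIntegral.integral_of_le hab.le]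
  have hc : (2 * (Real.pi : ℂ) * Complex.I * (s : ℂ)) ≠ 0 := by
    simp [hs, Real.pi_ne_zero]
  have h1 : (∫ x in a..b, expF s x) = (expF s b - expF s a) / (2 * (Real.pi : ℂ) * Complex.I * (s : ℂ)) := by
    unfold expF
    exact integral_exp_mul_complex hc
  rw [h1, norm_div]
  have h2 : ‖(2 * (Real.pi : ℂ) * Complex.I * (s : ℂ))‖ = 2 * Real.pi * |s| := by
    simp [abs_of_pos Real.pi_pos]
  rw [h2]
  have h3 : ‖expF s b - expF s a‖ ≤ 2 := by
    refine (norm_sub_le _ _).trans ?_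
    rw [expF_norm, expF_norm]; norm_num
  have hs' : 0 < |s| := abs_pos.2 hs
  have hpi := Real.pi_gt_three
  rw [div_mul_eq_mul_div, div_le_iff₀ (by positivity)]
  nlinarith [mul_nonneg (norm_nonneg (expF s b - expF s a)) hs'.le]

lemma phiF_union {ι : Type*} [DecidableEq ι] (S : Finset ι) : ∀ a b : ι → ℝ, ∃ C : ℝ, ∀ s,
    ‖phiF (⋃ j ∈ S, Ioo (a j) (b j)) s‖ * |s| ≤ C := by
  induction S using Finset.induction_on with
  | empty => intro a b; exact ⟨0, by simp [phiF]⟩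
  | insert i S hi ih =>
    intro a b
    obtain ⟨C1, h1⟩ := ih a b
    obtain ⟨C2, h2⟩ := ih (fun j => max (a j) (a i)) (fun j => min (b j) (b i))
    refine ⟨2 + C1 + C2, fun s => ?_⟩
    set U := ⋃ j ∈ S, Ioo (a j) (b j) with hU
    have hfin : volume U ≠ ⊤ := by
      refine ((measure_biUnion_finset_le S _).trans_lt ?_).ne
      exact ENNReal.sum_lt_top.2 fun j _ => by simp
    have hmeas : MeasurableSet U :=
      Finset.measurableSet_biUnion S fun j _ => measurableSet_Ioo
    have hint : (⋃ j ∈ S, Ioo (max (a j) (a i)) (min (b j) (b i))) = U ∩ Ioo (a i) (b i) := by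
      rw [hU, iUnion₂_inter]
      simp only [Ioo_inter_Ioo]
    have key : phiF (Ioo (a i) (b i) ∪ U) s = phiF (Ioo (a i) (b i)) s + phiF U s
        - phiF (U ∩ Ioo (a i) (b i)) s := by
      have := setIntegral_union (μ := volume) (f := expF s) (s := U) (t := Ioo (a i) (b i) \ U)
        disjoint_sdiff_right (measurableSet_Ioo.diff hmeas) (expF_integrableOn hfin s)
        ((expF_integrableOn (by simp) s).mono_set diff_subset)
      have h4 := integral_inter_add_diff (μ := volume) (f := expF s) (s := Ioo (a i) (b i)) hmeas
        (expF_integrableOn (by simp) s)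
      unfold phiF
      rw [union_comm, ← union_diff_self, this, ← h4, inter_comm U]
      ring
    rw [Finset.set_biUnion_insert, key]
    rw [← hint]
    have e1 := h1 s
    have e2 := h2 s
    have e3 := phiF_Ioo (a i) (b i) s
    have e4 := norm_sub_le (phiF (Ioo (a i) (b i)) s + phiF U s)
      (phiF (⋃ j ∈ S, Ioo (max (a j) (a i)) (min (b j) (b i))) s)
    have e5 := norm_add_le (phiF (Ioo (a i) (b i)) s) (phiF U s)
    have := mul_le_mul_of_nonneg_right (e4.trans (add_le_add_left e5 _)) (abs_nonneg s)
    refine this.trans ?_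
    rw [add_mul, add_mul]
    linarith

lemma phiF_continuous {S : Set ℝ} (hS : volume S ≠ ⊤) : Continuous (phiF S) := by
  haveI : IsFiniteMeasure (volume.restrict S) := ⟨by simpa using hS.lt_top⟩
  unfold phiF
  refine continuous_of_dominated (bound := fun _ => 1)
    (fun s => (expF_continuous s).aestronglyMeasurable)
    (fun s => Filter.Eventually.of_forall fun x => (expF_norm s x).le)
    (integrable_const _) (Filter.Eventually.of_forall fun x => ?_)
  unfold expF; fun_prop

lemma phiF_zero {S : Set ℝ} (hS : volume S = 1) : phiF S 0 = 1 := by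
  simp [phiF, expF, Measure.real, hS]

lemma phiF_le_one {S : Set ℝ} (hS : volume S = 1) (s : ℝ) : ‖phiF S s‖ ≤ 1 := by
  have := norm_setIntegral_le_of_norm_le_const (μ := volume) (s := S) (f := expF s) (C := 1)
    (by simp [hS]) (fun x _ => (expF_norm s x).le)
  simpa [phiF, Measure.real, hS] using this

/-- the exponentials as elements of L2 -/
noncomputable def EL {S : Set ℝ} (hS : volume S ≠ ⊤) (s : ℝ) : Lp ℂ 2 (volume.restrict S) :=
  (expF_memLp hS s).toLp

lemma inner_EL {S : Set ℝ} (hS : volume S ≠ ⊤) (s t : ℝ) :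
    inner ℂ (EL hS s) (EL hS t) = phiF S (t - s) := by
  rw [L2.inner_def]
  unfold phiF
  apply integral_congr_ae
  filter_upwards [(expF_memLp hS s).coeFn_toLp, (expF_memLp hS t).coeFn_toLp] with x h1 h2
  unfold EL
  rw [h1, h2, RCLike.inner_apply, mul_comm, expF_conj_mul]

lemma decay_bound {C δ ξ p : ℝ} (hδ : 0 < δ) (hp : 0 ≤ p) (h1 : p ≤ 1) (h2 : p * |ξ| ≤ C) :
    p ^ 2 ≤ (1 + C ^ 2) * (3 + 2 / δ ^ 2) * (1 / (1 + (⌊ξ / δ⌋ : ℝ) ^ 2)) := by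
  set m : ℝ := (⌊ξ / δ⌋ : ℝ) with hm
  have a1 : p ^ 2 * (1 + ξ ^ 2) ≤ 1 + C ^ 2 := by
    have : (p * |ξ|) ^ 2 ≤ C ^ 2 := pow_le_pow_left₀ (by positivity) h2 2
    rw [mul_pow, sq_abs] at this
    nlinarith
  have a2 : 1 + m ^ 2 ≤ (3 + 2 / δ ^ 2) * (1 + ξ ^ 2) := by
    set u := ξ / δ with hu
    have b1 : m ≤ u := Int.floor_le _
    have b2 : u < m + 1 := Int.lt_floor_add_one _
    have b3 : m ^ 2 ≤ 2 * u ^ 2 + 2 := by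
      rcases le_total 0 m with h | h
      · nlinarith
      · nlinarith [sq_nonneg (u + (u - m)), sq_nonneg (u-1), sq_nonneg (u+1)]
    have b4 : u ^ 2 = ξ ^ 2 / δ ^ 2 := by rw [hu, div_pow]
    have b5 : 0 ≤ 2 / δ ^ 2 := by positivity
    have b6 : 2 * u ^ 2 = 2 / δ ^ 2 * ξ ^ 2 := by rw [b4]; ring
    nlinarith [sq_nonneg ξ]
  rw [mul_one_div, le_div_iff₀ (by positivity)]
  calc p ^ 2 * (1 + m ^ 2) ≤ p ^ 2 * ((3 + 2 / δ ^ 2) * (1 + ξ ^ 2)) := by gcongr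
    _ = (p ^ 2 * (1 + ξ ^ 2)) * (3 + 2 / δ ^ 2) := by ring
    _ ≤ _ := by gcongr

lemma summable_G : Summable (fun m : ℤ => 1 / (1 + (m : ℝ) ^ 2)) := by
  have h : Summable (fun m : ℤ => 1 / (m : ℝ) ^ 2) := Real.summable_one_div_int_pow.2 one_lt_two
  refine Summable.of_norm_bounded_eventually h ?_
  have : ∀ᶠ m : ℤ in Filter.cofinite, m ≠ 0 := by
    simpa using (Set.finite_singleton (0 : ℤ)).compl_mem_cofinite
  filter_upwards [this] with m hm
  have : 0 < (m : ℝ) ^ 2 := by positivity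
  rw [Real.norm_of_nonneg (by positivity)]
  gcongr
  linarith

theorem limit_of_translates_is_spectrum (n : ℕ) (a b : Fin n → ℝ) (Ω : Set ℝ)
    (hΩ : Ω = ⋃ j, Ioo (a j) (b j))
    (hvol : volume Ω = 1)
    (Λ : Set ℝ) (hΛ : IsSpectrum Ω Λ)
    (L : Set ℝ) (c : ℕ → ℝ)
    (hc : ∀ k : ℕ, 1 ≤ k → c k ∈ Λ)
    (hL : ∀ k : ℕ, 1 ≤ k →
      L ∩ Ioo (-(k : ℝ)) (k : ℝ) = ((fun t => t - c k) '' Λ) ∩ Ioo (-(k : ℝ)) (k : ℝ)) :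
    IsSpectrum Ω L := by
  have hfin : volume Ω ≠ ⊤ := by simp [hvol]
  obtain ⟨F, hF, hFo, hFc⟩ := hΛ
  have hFE : ∀ l : Λ, F l = EL hfin l := fun l => by
    apply Lp.ext
    exact (hF l).trans (expF_memLp hfin l).coeFn_toLp.symm
  have hnorm : ∀ s, ‖EL hfin s‖ = 1 := fun s => by
    have h : (inner ℂ (EL hfin s) (EL hfin s) : ℂ) = 1 := by
      rw [inner_EL, sub_self, phiF_zero hvol]
    have h' : ‖EL hfin s‖ ^ 2 = 1 := by
      rw [norm_sq_eq_re_inner (𝕜 := ℂ), h]; simp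
    nlinarith [norm_nonneg (EL hfin s)]
  have horth : ∀ x ∈ Λ, ∀ y ∈ Λ, x ≠ y → phiF Ω (y - x) = 0 := by
    intro x hx y hy hxy
    have : inner ℂ (F ⟨x, hx⟩) (F ⟨y, hy⟩) = 0 := hFo.2 (by simpa using hxy)
    rwa [hFE, hFE, inner_EL] at this
  -- decay
  obtain ⟨C, hC⟩ : ∃ C : ℝ, ∀ s, ‖phiF Ω s‖ * |s| ≤ C := by
    obtain ⟨C, hC⟩ := phiF_union Finset.univ a b
    refine ⟨C, ?_⟩
    simpa [← hΩ] using hC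
  -- separation
  obtain ⟨δ, hδ, hsep⟩ : ∃ δ > 0, ∀ x ∈ Λ, ∀ y ∈ Λ, |y - x| < δ → x = y := by
    have h1 : ∀ᶠ s in nhds (0 : ℝ), phiF Ω s ≠ 0 :=
      (phiF_continuous hfin).continuousAt.eventually_ne (by rw [phiF_zero hvol]; exact one_ne_zero)
    obtain ⟨δ, hδ, h⟩ := Metric.eventually_nhds_iff.1 h1
    refine ⟨δ, hδ, fun x hx y hy hxy => ?_⟩
    by_contra hne
    exact h (by simpa [Real.dist_eq] using hxy) (horth x hx y hy hne)
  have hbig : ∀ x : ℝ, ∃ K : ℕ, 1 ≤ K ∧ ∀ k : ℕ, K ≤ k → |x| < k := fun x => by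
    obtain ⟨K, hK⟩ := exists_nat_gt |x|
    refine ⟨max K 1, le_max_right _ _, fun k hk => hK.trans_le ?_⟩
    exact_mod_cast (le_max_left _ _).trans hk
  have hLΛ : ∀ l ∈ L, ∀ k : ℕ, 1 ≤ k → |l| < k → l + c k ∈ Λ := by
    intro l hl k hk hlk
    have : l ∈ L ∩ Ioo (-(k : ℝ)) (k : ℝ) := ⟨hl, abs_lt.1 hlk⟩
    rw [hL k hk] at this
    obtain ⟨⟨t, ht, rfl⟩, -⟩ := this
    simpa using ht
  have hΛL : ∀ l ∈ Λ, ∀ k : ℕ, 1 ≤ k → |l - c k| < k → l - c k ∈ L := by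
    intro l hl k hk hlk
    have : l - c k ∈ ((fun t => t - c k) '' Λ) ∩ Ioo (-(k : ℝ)) (k : ℝ) :=
      ⟨⟨l, hl, rfl⟩, abs_lt.1 hlk⟩
    rw [← hL k hk] at this
    exact this.1
  have hLo : Orthonormal ℂ (fun l : L => EL hfin (l : ℝ)) := by
    refine ⟨fun l => hnorm _, fun x y hxy => ?_⟩
    change inner ℂ (EL hfin (x : ℝ)) (EL hfin (y : ℝ)) = 0
    rw [inner_EL]
    obtain ⟨K1, h1, h1'⟩ := hbig x
    obtain ⟨K2, h2, h2'⟩ := hbig y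
    set k := max K1 K2
    have hk : 1 ≤ k := h1.trans (le_max_left _ _)
    have := horth _ (hLΛ x x.2 k hk (h1' k (le_max_left _ _)))
      _ (hLΛ y y.2 k hk (h2' k (le_max_right _ _))) (by
        intro h; exact hxy (Subtype.ext (add_right_cancel h)))
    simpa using this
  refine ⟨fun l => EL hfin l, fun l => (expF_memLp hfin l).coeFn_toLp, hLo, ?_⟩
  set V := (Submodule.span ℂ (Set.range (fun l : L => EL hfin (l : ℝ)))).topologicalClosure with hV
  suffices hmain : ∀ t : ℝ, EL hfin t ∈ V by
    rw [eq_top_iff, ← hFc]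
    refine Submodule.topologicalClosure_minimal _ ?_ (Submodule.isClosed_topologicalClosure _)
    rw [Submodule.span_le]
    rintro _ ⟨l, rfl⟩
    rw [hFE]
    exact hmain _
  intro t
  -- Parseval
  have hpars : ∀ s : ℝ, HasSum (fun l : Λ => ‖phiF Ω (s - l)‖ ^ 2) 1 := by
    intro s
    let B := HilbertBasis.mk hFo hFc.ge
    have h := B.hasSum_inner_mul_inner (EL hfin s) (EL hfin s)
    rw [inner_EL, sub_self, phiF_zero hvol] at h
    have h' : HasSum (fun l : Λ => ((‖phiF Ω (s - l)‖ ^ 2 : ℝ) : ℂ)) ((1 : ℝ) : ℂ) := by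
      rw [Complex.ofReal_one]
      refine hasSum_congr_aux h fun l => ?_
      have hB : B l = EL hfin l := by
        rw [← hFE]; exact congrFun (HilbertBasis.coe_mk hFo hFc.ge) l
      rw [hB, ← inner_conj_symm (EL hfin s), inner_EL, Complex.conj_mul']
      push_cast; rfl
    exact Complex.hasSum_ofReal.1 h'
  rw [hV, ← SetLike.mem_coe, Submodule.topologicalClosure_coe, Metric.mem_closure_iff]
  intro ε hε
  -- tail
  set M := (1 + C ^ 2) * (3 + 2 / δ ^ 2) with hM
  have hGs : Summable (fun m : ℤ => M * (1 / (1 + (m : ℝ) ^ 2))) := summable_G.mul_left M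
  have hη : 0 < ε ^ 2 / 2 := by positivity
  obtain ⟨T, hT⟩ := summable_iff_vanishing_norm.1 hGs (ε ^ 2 / 2) hη
  obtain ⟨R, hR⟩ : ∃ R : ℝ, ∀ m ∈ T, |(m : ℝ)| ≤ R := by
    obtain ⟨R, hR⟩ := (T.image (fun m : ℤ => |(m : ℝ)|)).bddAbove
    exact ⟨R, fun m hm => hR (by simpa using ⟨m, hm, rfl⟩)⟩
  obtain ⟨k, hk1, hk⟩ := hbig (|t| + (|R| + 1) * δ)
  have hk := hk k le_rfl
  have hsum := hpars (t + c k)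
  obtain ⟨S, hS⟩ : ∃ S : Finset Λ, 1 - ε ^ 2 / 2 < ∑ l ∈ S, ‖phiF Ω (t + c k - l)‖ ^ 2 :=
    (hsum.eventually_const_lt (by linarith)).exists
  classical
  have htail : ∑ l ∈ S.filter (fun l : Λ => ¬ |(l : ℝ) - c k| < k), ‖phiF Ω (t + c k - l)‖ ^ 2 < ε ^ 2 / 2 := by
    set S2 := S.filter (fun l : Λ => ¬ |(l : ℝ) - c k| < k) with hS2
    let fl : Λ → ℤ := fun l => ⌊(t + c k - l) / δ⌋
    have hinj : Set.InjOn fl S2 := by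
      intro x _ y _ hxy
      have h := Int.abs_sub_lt_one_of_floor_eq_floor hxy
      rw [← sub_div, abs_div, abs_of_pos hδ, div_lt_one hδ] at h
      refine Subtype.ext (hsep _ x.2 _ y.2 ?_)
      rwa [show t + c k - (x : ℝ) - (t + c k - y) = y - x by ring] at h
    have hdis : Disjoint (S2.image fl) T := by
      rw [Finset.disjoint_left]
      intro m hm hmT
      obtain ⟨l, hl, rfl⟩ := Finset.mem_image.1 hm
      have hl2 := (Finset.mem_filter.1 hl).2
      push Not at hl2
      have h1 := hR _ hmT
      have h2 : |(t + c k - l) / δ| ≤ |R| + 1 := by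
        have g1 := Int.floor_le ((t + c k - l) / δ)
        have g2 := Int.lt_floor_add_one ((t + c k - l) / δ)
        have g3 := abs_le.1 (h1.trans (le_abs_self R))
        rw [abs_le]
        constructor <;> [linarith [g3.1]; linarith [g3.2]]
      rw [abs_div, abs_of_pos hδ, div_le_iff₀ hδ] at h2
      have h3 : |(l : ℝ) - c k| ≤ |t| + |t + c k - l| := by
        have := abs_sub t (t + c k - l)
        rwa [show t - (t + c k - (l : ℝ)) = l - c k by ring] at this
      have := le_abs_self (|t| + (|R| + 1) * δ)
      linarith
    have h := hT _ hdis
    rw [Finset.sum_image hinj] at h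
    refine lt_of_le_of_lt ?_ ((le_abs_self _).trans_lt h)
    refine Finset.sum_le_sum fun l _ => ?_
    exact decay_bound hδ (norm_nonneg _) (phiF_le_one hvol _) (hC _)
  set S1 := S.filter (fun l : Λ => |(l : ℝ) - c k| < k) with hS1
  have hbulk : 1 - ε ^ 2 < ∑ l ∈ S1, ‖phiF Ω (t + c k - l)‖ ^ 2 := by
    have := Finset.sum_filter_add_sum_filter_not S (fun l : Λ => |(l : ℝ) - c k| < k)
      (fun l : Λ => ‖phiF Ω (t + c k - l)‖ ^ 2)
    linarith
  let v : S1 → Lp ℂ 2 (volume.restrict Ω) := fun l => EL hfin ((l : Λ) - c k)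
  have hmem : ∀ l : S1, ((l : Λ) : ℝ) - c k ∈ L := fun l =>
    hΛL _ (l : Λ).2 k hk1 (Finset.mem_filter.1 l.2).2
  have hvo : Orthonormal ℂ v := by
    refine hLo.comp (fun l : S1 => (⟨_, hmem l⟩ : L)) ?_
    intro x y hxy
    have : ((x : Λ) : ℝ) - c k = ((y : Λ) : ℝ) - c k := congrArg Subtype.val hxy
    exact Subtype.ext (Subtype.ext (sub_left_injective this))
  set w := ∑ l : S1, (inner ℂ (v l) (EL hfin t) : ℂ) • v l with hw
  refine ⟨w, ?_, ?_⟩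
  · refine Submodule.sum_mem _ fun l _ => Submodule.smul_mem _ _ (Submodule.subset_span ?_)
    exact ⟨⟨_, hmem l⟩, rfl⟩
  · have hin : ∀ l : S1, ‖(inner ℂ (v l) (EL hfin t) : ℂ)‖ ^ 2
        = ‖phiF Ω (t + c k - (l : Λ))‖ ^ 2 := fun l => by
      rw [inner_EL]; congr 3; ring
    have hsq : ‖EL hfin t - w‖ ^ 2 = 1 - ∑ l : S1, ‖(inner ℂ (v l) (EL hfin t) : ℂ)‖ ^ 2 := by
      have e1 : (inner ℂ (EL hfin t) w : ℂ)
          = ((∑ l : S1, ‖(inner ℂ (v l) (EL hfin t) : ℂ)‖ ^ 2 : ℝ) : ℂ) := by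
        rw [hw, inner_sum, Complex.ofReal_sum]
        refine Finset.sum_congr rfl fun l _ => ?_
        rw [inner_smul_right, ← inner_conj_symm (EL hfin t), Complex.mul_conj']
        push_cast; rfl
      have e2 : (inner ℂ w w : ℂ)
          = ((∑ l : S1, ‖(inner ℂ (v l) (EL hfin t) : ℂ)‖ ^ 2 : ℝ) : ℂ) := by
        rw [hw, hvo.inner_sum, Complex.ofReal_sum]
        refine Finset.sum_congr rfl fun l _ => ?_
        rw [Complex.conj_mul']
        push_cast; rfl
      have e3 : ‖w‖ ^ 2 = ∑ l : S1, ‖(inner ℂ (v l) (EL hfin t) : ℂ)‖ ^ 2 := by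
        rw [norm_sq_eq_re_inner (𝕜 := ℂ), e2]
        exact Complex.ofReal_re _
      rw [norm_sub_sq (𝕜 := ℂ), e1, e3, hnorm]
      simp only [RCLike.re_eq_complex_re, Complex.ofReal_re]
      ring
    have hsum1 : ∑ l : S1, ‖(inner ℂ (v l) (EL hfin t) : ℂ)‖ ^ 2
        = ∑ l ∈ S1, ‖phiF Ω (t + c k - l)‖ ^ 2 := by
      rw [← Finset.sum_coe_sort S1]
      exact Finset.sum_congr rfl fun l _ => hin l
    rw [dist_eq_norm]
    refine lt_of_pow_lt_pow_left₀ 2 hε.le ?_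
    rw [hsq, hsum1]
    linarith
end

section
/- Let Ω = ⋃_{j=1}^n (a_j, b_j) ⊆ ℝ be a finite union of bounded open intervals of total length 1, let Λ be a spectrum of Ω, and let T > 0. Suppose λ₁, λ₂ ∈ Λ with λ₁ > λ₂ are such that Λ ∩ [λ₁, λ₁+T] − λ₁ = Λ ∩ [λ₂, λ₂+T] − λ₂, and that both Λ ∩ [λ₁, λ₁+T] and Λ ∩ [λ₂, λ₂+T] are generating sets, i.e., span φ(Λ ∩ [λ_i, λ_i+T]) = span φ(Λ) for i = 1, 2. Then λ₁ − λ₂ is a period of Λ: Λ + (λ₁ − λ₂) = Λ. -/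
open MeasureTheory Set

/-- The map `φ : ℝ → ℂ^{2n}`. -/
noncomputable def phiMap (n : ℕ) (a b : Fin n → ℝ) (x : ℝ) : (Fin n → ℂ) × (Fin n → ℂ) :=
  (fun j => Complex.exp (-(2 * (Real.pi : ℂ) * Complex.I * (a j : ℂ) * (x : ℂ))),
   fun j => Complex.exp (-(2 * (Real.pi : ℂ) * Complex.I * (b j : ℂ) * (x : ℂ))))


/-- `t ∫_S e(ty) dy`. -/
noncomputable def gS (S : Set ℝ) : ℝ → ℂ := fun t => (t : ℂ) * ∫ y in S, expF t y

lemma expF_cont (t : ℝ) : Continuous (expF t) := by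
  unfold expF; fun_prop

lemma expF_norm_s17 (t y : ℝ) : ‖expF t y‖ = 1 := by
  have h : 2 * (Real.pi : ℂ) * Complex.I * (t : ℂ) * (y : ℂ)
      = ((2 * Real.pi * t * y : ℝ) : ℂ) * Complex.I := by push_cast; ring
  unfold expF
  rw [h, Complex.norm_exp_ofReal_mul_I]

lemma expF_intOn (t : ℝ) (S : Set ℝ) (hS : volume S ≠ ⊤) :
    IntegrableOn (expF t) S := by
  have : IsFiniteMeasure (volume.restrict S) := ⟨by simpa using hS.lt_top⟩
  exact Integrable.of_bound (expF_cont t).aestronglyMeasurable 1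
    (Filter.Eventually.of_forall fun y => (expF_norm_s17 t y).le)

lemma gS_Ioo (a b : ℝ) (E : Set ℝ) (ha : a ∈ E) (hb : b ∈ E) :
    gS (Ioo a b) ∈ Submodule.span ℂ ((fun c t => expF t c) '' E) := by
  rcases lt_or_ge a b with hab | hab
  · have : gS (Ioo a b) = (1 / (2 * (Real.pi : ℂ) * Complex.I)) •
        ((fun t => expF t b) - fun t => expF t a) := by
      funext t
      have hpi : (Real.pi : ℂ) ≠ 0 := by exact_mod_cast Real.pi_ne_zero
      by_cases ht : t = 0
      · simp [gS, expF, ht]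
      have ht' : (t : ℂ) ≠ 0 := by exact_mod_cast ht
      have hc : 2 * (Real.pi : ℂ) * Complex.I * (t : ℂ) ≠ 0 := by
        simp [hpi, ht]
      simp only [gS, expF, Pi.smul_apply, Pi.sub_apply, smul_eq_mul]
      rw [← integral_Ioc_eq_integral_Ioo, ← intervalIntegral.integral_of_le hab.le,
        integral_exp_mul_complex hc]
      field_simp
    rw [this]
    exact Submodule.smul_mem _ _ (Submodule.sub_mem _
      (Submodule.subset_span ⟨b, hb, rfl⟩) (Submodule.subset_span ⟨a, ha, rfl⟩))
  · have : gS (Ioo a b) = 0 := by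
      funext t; simp [gS, Ioo_eq_empty_of_le hab]
    rw [this]; exact Submodule.zero_mem _

lemma vol_fin {ι : Type*} (s : Finset ι) (a b : ι → ℝ) :
    volume (⋃ j ∈ s, Ioo (a j) (b j)) ≠ ⊤ :=
  (measure_biUnion_lt_top s.finite_toSet (fun j _ => by simp)).ne

lemma gS_union {ι : Type*} (E : Set ℝ) (s : Finset ι) :
    ∀ (a b : ι → ℝ), (∀ j, a j ∈ E) → (∀ j, b j ∈ E) →
    gS (⋃ j ∈ s, Ioo (a j) (b j)) ∈ Submodule.span ℂ ((fun c t => expF t c) '' E) := by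
  classical
  induction s using Finset.induction_on with
  | empty =>
    intro a b _ _
    have : gS (⋃ j ∈ (∅ : Finset ι), Ioo (a j) (b j)) = 0 := by
      funext t; simp [gS]
    rw [this]; exact Submodule.zero_mem _
  | insert i s hi ih =>
    intro a b ha hb
    have h1 := ih a b ha hb
    have h2 := gS_Ioo (a i) (b i) E (ha i) (hb i)
    have h3 := ih (fun j => max (a i) (a j)) (fun j => min (b i) (b j))
      (fun j => by rcases max_choice (a i) (a j) with h | h <;> simp [h, ha])
      (fun j => by rcases min_choice (b i) (b j) with h | h <;> simp [h, hb])
    have hm : MeasurableSet (⋃ j ∈ s, Ioo (a j) (b j)) :=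
      Finset.measurableSet_biUnion _ (fun j _ => measurableSet_Ioo)
    have hI : (⋃ j ∈ s, Ioo (max (a i) (a j)) (min (b i) (b j)))
        = Ioo (a i) (b i) ∩ ⋃ j ∈ s, Ioo (a j) (b j) := by
      rw [inter_iUnion₂]
      simp only [Ioo_inter_Ioo]
    have : gS (⋃ j ∈ insert i s, Ioo (a j) (b j)) = gS (Ioo (a i) (b i))
        + gS (⋃ j ∈ s, Ioo (a j) (b j))
        - gS (⋃ j ∈ s, Ioo (max (a i) (a j)) (min (b i) (b j))) := by
      funext t
      rw [hI, Finset.set_biUnion_insert]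
      simp only [gS, Pi.add_apply, Pi.sub_apply]
      have hi1 := expF_intOn t (Ioo (a i) (b i)) (by simp)
      have hi2 := expF_intOn t _ (vol_fin s a b)
      rw [← mul_add, ← mul_sub, ← integral_add_measure hi1 hi2,
        ← Measure.restrict_union_add_inter _ hm,
        integral_add_measure (hi1.union hi2) (hi1.mono_set inter_subset_left),
        add_sub_cancel_right]
    rw [this]
    exact Submodule.sub_mem _ (Submodule.add_mem _ h2 h1) h3

lemma functional (n : ℕ) (a b : Fin n → ℝ) (g : ℝ → ℂ)
    (hg : g ∈ Submodule.span ℂ ((fun c t => expF t c) '' (range a ∪ range b))) (x : ℝ) :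
    ∃ L : ((Fin n → ℂ) × (Fin n → ℂ)) →ₗ[ℂ] ℂ, ∀ l, g (x - l) = L (phiMap n a b l) := by
  induction hg using Submodule.span_induction with
  | mem g hg =>
    obtain ⟨c, hc, rfl⟩ := hg
    rcases hc with ⟨j, rfl⟩ | ⟨j, rfl⟩
    · refine ⟨expF x (a j) • (LinearMap.proj j ∘ₗ LinearMap.fst ℂ _ _), fun l => ?_⟩
      simp only [phiMap, expF, LinearMap.smul_apply, LinearMap.comp_apply, LinearMap.fst_apply,
        LinearMap.proj_apply, smul_eq_mul, ← Complex.exp_add]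
      congr 1; push_cast; ring
    · refine ⟨expF x (b j) • (LinearMap.proj j ∘ₗ LinearMap.snd ℂ _ _), fun l => ?_⟩
      simp only [phiMap, expF, LinearMap.smul_apply, LinearMap.comp_apply, LinearMap.snd_apply,
        LinearMap.proj_apply, smul_eq_mul, ← Complex.exp_add]
      congr 1; push_cast; ring
  | zero => exact ⟨0, fun l => by simp⟩
  | add g h _ _ ihg ihh =>
    obtain ⟨L, hL⟩ := ihg
    obtain ⟨M, hM⟩ := ihh
    exact ⟨L + M, fun l => by simp [hL, hM]⟩
  | smul r g _ ih =>
    obtain ⟨L, hL⟩ := ih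
    exact ⟨r • L, fun l => by simp [hL]⟩

lemma expF_inner (x l y : ℝ) : inner ℂ (expF l y) (expF x y) = expF (x - l) y := by
  simp only [RCLike.inner_apply, expF, ← Complex.exp_conj, ← Complex.exp_add, map_mul,
    Complex.conj_ofReal, Complex.conj_I, Complex.conj_ofNat]
  congr 1; push_cast; ring

lemma inner_eq {Ω : Set ℝ} {x l : ℝ} (f g : Lp ℂ 2 (volume.restrict Ω))
    (hf : ⇑f =ᵐ[volume.restrict Ω] expF l) (hg : ⇑g =ᵐ[volume.restrict Ω] expF x) :
    inner ℂ f g = ∫ y in Ω, expF (x - l) y := by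
  rw [L2.inner_def]
  refine integral_congr_ae ?_
  filter_upwards [hf, hg] with y h1 h2
  rw [h1, h2, expF_inner]

lemma mem_iff (n : ℕ) (a b : Fin n → ℝ) (Ω : Set ℝ)
    (hΩ : Ω = ⋃ j, Ioo (a j) (b j)) (hvol : volume Ω = 1)
    (Λ : Set ℝ) (hΛ : IsSpectrum Ω Λ) (W : Set ℝ) (hW : W ⊆ Λ)
    (hgen : Submodule.span ℂ (phiMap n a b '' W) = Submodule.span ℂ (phiMap n a b '' Λ))
    (x : ℝ) : x ∈ Λ ↔ ∀ l ∈ W, gS Ω (x - l) = 0 := by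
  obtain ⟨F, hF, hon, hcl⟩ := hΛ
  constructor
  · intro hx l hl
    by_cases hxl : x = l
    · simp [gS, hxl]
    have h := hon.2 (i := ⟨l, hW hl⟩) (j := ⟨x, hx⟩) (by
      intro h; exact hxl (Subtype.ext_iff.mp h).symm)
    beta_reduce at h
    rw [inner_eq _ _ (hF _) (hF _)] at h
    simp only [gS, h, mul_zero]
  · intro h
    have hspan : gS Ω ∈ Submodule.span ℂ ((fun c t => expF t c) '' (range a ∪ range b)) := by
      have := gS_union (range a ∪ range b) Finset.univ a b (by simp) (by simp)
      simpa [hΩ] using this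
    obtain ⟨L, hL⟩ := functional n a b _ hspan x
    have hker : Submodule.span ℂ (phiMap n a b '' Λ) ≤ LinearMap.ker L := by
      rw [← hgen, Submodule.span_le]
      rintro _ ⟨l, hl, rfl⟩
      simp only [SetLike.mem_coe, LinearMap.mem_ker]
      rw [← hL, h l hl]
    have hall : ∀ l ∈ Λ, gS Ω (x - l) = 0 := fun l hl => by
      rw [hL]
      exact hker (Submodule.subset_span ⟨l, hl, rfl⟩)
    by_contra hx
    have : IsFiniteMeasure (volume.restrict Ω) := ⟨by simp [hvol]⟩
    have hmem : MemLp (expF x) 2 (volume.restrict Ω) :=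
      MemLp.of_bound (expF_cont x).aestronglyMeasurable 1
        (Filter.Eventually.of_forall fun y => (expF_norm_s17 x y).le)
    have horth : hmem.toLp ∈ (Submodule.span ℂ (range F))ᗮ := by
      rw [Submodule.mem_orthogonal]
      intro u hu
      induction hu using Submodule.span_induction with
      | mem u hu =>
        obtain ⟨l, rfl⟩ := hu
        rw [inner_eq _ _ (hF l) hmem.coeFn_toLp]
        have h0 := hall l l.2
        have hne : ((x - (l : ℝ) : ℝ) : ℂ) ≠ 0 := by
          rw [Complex.ofReal_ne_zero, sub_ne_zero]
          rintro rfl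
          exact hx l.2
        exact (mul_eq_zero.mp h0).resolve_left hne
      | zero => simp
      | add u v _ _ hu hv => rw [inner_add_left, hu, hv, add_zero]
      | smul r u _ hu => rw [inner_smul_left, hu, mul_zero]
    rw [(Submodule.topologicalClosure_eq_top_iff).mp hcl, Submodule.mem_bot] at horth
    have h1 := hmem.coeFn_toLp
    rw [horth] at h1
    have h2 : ∀ᵐ y ∂(volume.restrict Ω), False := by
      filter_upwards [h1, Lp.coeFn_zero ℂ 2 (volume.restrict Ω)] with y hy hy0
      have := expF_norm_s17 x y
      rw [← hy, hy0] at this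
      simp at this
    rw [Filter.eventually_false_iff_eq_bot, ae_eq_bot, Measure.restrict_eq_zero, hvol] at h2
    exact one_ne_zero h2

/-- If two generating windows of the spectrum `Λ` have the same shape, then the
distance between their left endpoints is a period of `Λ`. -/
theorem equal_generating_windows_give_period (n : ℕ) (a b : Fin n → ℝ) (Ω : Set ℝ)
    (hΩ : Ω = ⋃ j, Ioo (a j) (b j))
    (hvol : volume Ω = 1)
    (Λ : Set ℝ) (hΛ : IsSpectrum Ω Λ)
    (T : ℝ) (hT : 0 < T)
    (l₁ l₂ : ℝ) (hl₁ : l₁ ∈ Λ) (hl₂ : l₂ ∈ Λ) (hlt : l₂ < l₁)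
    (hshape : (fun t => t - l₁) '' (Λ ∩ Icc l₁ (l₁ + T))
            = (fun t => t - l₂) '' (Λ ∩ Icc l₂ (l₂ + T)))
    (hgen₁ : Submodule.span ℂ (phiMap n a b '' (Λ ∩ Icc l₁ (l₁ + T)))
           = Submodule.span ℂ (phiMap n a b '' Λ))
    (hgen₂ : Submodule.span ℂ (phiMap n a b '' (Λ ∩ Icc l₂ (l₂ + T)))
           = Submodule.span ℂ (phiMap n a b '' Λ)) :
    (fun t => t + (l₁ - l₂)) '' Λ = Λ := by
  have key : ∀ x, x ∈ Λ ↔ x + (l₁ - l₂) ∈ Λ := by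
    intro x
    rw [mem_iff n a b Ω hΩ hvol Λ hΛ _ inter_subset_left hgen₂ x,
      mem_iff n a b Ω hΩ hvol Λ hΛ _ inter_subset_left hgen₁ (x + (l₁ - l₂))]
    constructor
    · intro h l hl
      have : l - l₁ ∈ (fun t => t - l₂) '' (Λ ∩ Icc l₂ (l₂ + T)) := hshape ▸ ⟨l, hl, rfl⟩
      obtain ⟨m, hm, hml⟩ := this
      have := h m hm
      dsimp only at hml
      rwa [show x - m = x + (l₁ - l₂) - l by linarith] at this
    · intro h l hl
      have : l - l₂ ∈ (fun t => t - l₁) '' (Λ ∩ Icc l₁ (l₁ + T)) := hshape ▸ ⟨l, hl, rfl⟩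
      obtain ⟨m, hm, hml⟩ := this
      have := h m hm
      dsimp only at hml
      rwa [show x + (l₁ - l₂) - m = x - l by linarith] at this
  ext y
  constructor
  · rintro ⟨x, hx, rfl⟩
    exact (key x).mp hx
  · intro hy
    refine ⟨y - (l₁ - l₂), (key _).mpr (by simpa using hy), by simp⟩
end
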